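/- For all n ≥ 3 and all natural numbers u, v, the number of π ∈ NC(n,3) with skip(π) = u and leap(π) = v equals the number of parallelogram polyominoes P ∈ PP(n−2,3) with area(P) = u and bounce(P) = v. (The pair (skip, leap) is a combinatorial interpretation of the q,t-Narayana polynomial N_{n,3}(q,t).) -/

import Mathlib

namespace QtN

/-! ### Lattice paths and parallelogram polyominoes -/

/-- A step of a lattice path: east or north. -/
inductive Step : Type
  | E : Step
  | N : Step
  deriving DecidableEq, Repr

/-- Number of east steps of a path. -/
def countE (w : List Step) : ℕ := w.count Step.E

/-- Number of north steps of a path. -/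
def countN (w : List Step) : ℕ := w.count Step.N

/-- Endpoint of a path started at the origin. -/
def pathPos (w : List Step) : ℕ × ℕ := (countE w, countN w)

/-- The set of lattice points visited by a path started at the origin. -/
def pathPts (w : List Step) : Finset (ℕ × ℕ) :=
  ((List.range (w.length + 1)).map (fun i => pathPos (w.take i))).toFinset

/-- `colHeightsAux w h`: for each east step of `w` (in order), the number of north
steps preceding it, starting with `h` north steps already performed. -/
def colHeightsAux : List Step → ℕ → List ℕ
  | [], _ => []
  | Step.E :: r, h => h :: colHeightsAux r h
  | Step.N :: r, h => colHeightsAux r (h + 1)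

/-- Height at which the path `w` crosses the vertical strip `i ≤ x ≤ i + 1`. -/
def colHeight (w : List Step) (i : ℕ) : ℕ := (colHeightsAux w 0).getD i 0

/-- A parallelogram polyomino of size `m × n`: a pair of monotone lattice paths from
`(0,0)` to `(m,n)` (east/north steps), the upper path staying weakly above the lower
path, and the two paths meeting only at `(0,0)` and `(m,n)`. -/
structure Polyomino (m n : ℕ) : Type where
  lower : List Step
  upper : List Step
  lowerE : countE lower = m
  lowerN : countN lower = n
  upperE : countE upper = m
  upperN : countN upper = n
  above : ∀ i < m, colHeight lower i ≤ colHeight upper i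
  meet : pathPts upper ∩ pathPts lower = {(0, 0), (m, n)}

/-- The area statistic: number of unit squares between the two paths,
minus `(m + n - 1)`. -/
def area {m n : ℕ} (P : Polyomino m n) : ℕ :=
  (∑ i ∈ Finset.range m, (colHeight P.upper i - colHeight P.lower i)) - (m + n - 1)

/-- Where an eastward run at height `y`, starting at `x`, first hits the lower path. -/
def eastTarget (hL : ℕ → ℕ) (m x y : ℕ) : ℕ :=
  ((List.range m).filter (fun i => decide (x ≤ i ∧ y ≤ hL i))).headD m

/-- Total bounce contribution: from state `(x, y)` just after the `j`-th east-to-north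
turn (counting the turns made so far), alternately go north until hitting the upper
path and east until hitting the lower path, each step contributing the number of
east-to-north turns preceding it. -/
def bounceAux (hU hL : ℕ → ℕ) (m n : ℕ) : ℕ → ℕ → ℕ → ℕ → ℕ
  | 0, _, _, _ => 0
  | fuel + 1, x, y, j =>
    if x = m ∧ y = n then 0
    else
      let y' := hU (x - 1)
      let x' := if y' = n then m else eastTarget hL m x y'
      (j + 1) * ((y' - y) + (x' - x)) + bounceAux hU hL m n fuel x' y' (j + 1)

/-- The bounce statistic of a parallelogram polyomino: the bounce path starts with a
single east step (contributing `0`) and then alternates north runs (to the ceiling)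
and east runs (to the floor); each step contributes the number of east-to-north turns
preceding it; finally `(m + n - 1)` is subtracted. -/
def bounce {m n : ℕ} (P : Polyomino m n) : ℕ :=
  bounceAux (colHeight P.upper) (colHeight P.lower) m n (m + n + 2) 1 0 0 - (m + n - 1)

/-! ### Set partitions and noncrossing partitions -/

/-- Maximum of a finite set of naturals (`0` for the empty set). -/
def fmax (β : Finset ℕ) : ℕ := β.sup id

/-- Minimum of a finite set of naturals (`0` for the empty set). -/
def fmin (β : Finset ℕ) : ℕ := if h : β.Nonempty then β.min' h else 0

/-- A set partition of `{1, …, n}`, given by its finite set of blocks. -/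
structure SetPartition (n : ℕ) : Type where
  blocks : Finset (Finset ℕ)
  not_empty_mem : ∅ ∉ blocks
  cover : ∀ i : ℕ, i ∈ Finset.Icc 1 n ↔ ∃ β ∈ blocks, i ∈ β
  disjoint : ∀ β ∈ blocks, ∀ γ ∈ blocks, β ≠ γ → Disjoint β γ

/-- A family of blocks is noncrossing if there are no `a < b < c < d` with
`a, c` in one block and `b, d` in a different block. -/
def IsNoncrossing (bs : Finset (Finset ℕ)) : Prop :=
  ∀ a b c d : ℕ, a < b → b < c → c < d →
    ∀ β ∈ bs, ∀ γ ∈ bs, a ∈ β → c ∈ β → b ∈ γ → d ∈ γ → β = γ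

/-- `NC n k`: noncrossing partitions of `{1, …, n}` with exactly `n - k + 1` blocks. -/
abbrev NC (n k : ℕ) : Type :=
  {P : SetPartition n // IsNoncrossing P.blocks ∧ P.blocks.card = n - k + 1}

/-- The skip statistic: `∑_{β} (max β - min β - |β| + 1)`. -/
def skip (bs : Finset (Finset ℕ)) : ℕ :=
  ∑ β ∈ bs, ((fmax β + 1 - fmin β) - β.card)

/-- The non-singleton blocks of a partition. -/
def nsBlocks (bs : Finset (Finset ℕ)) : Finset (Finset ℕ) :=
  bs.filter (fun β => 2 ≤ β.card)

/-- The block of `bs` containing `x` (junk if there is not exactly one). -/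
def blockContaining (bs : Finset (Finset ℕ)) (x : ℕ) : Finset ℕ :=
  (bs.filter (fun β => x ∈ β)).sup id

/-- For a noncrossing partition in `NC n 3`, the quadruple `(a, b, c, d)` describing its
non-singleton blocks: for two pair blocks `{a,b}` and `{c,d}` (with `a` the global
minimum) this is `(a, b, c, d)`; for a single triple block `{a, b, c}` (`a < b < c`)
this is `(a, b, b, c)`. -/
def blockQuad (bs : Finset (Finset ℕ)) : ℕ × ℕ × ℕ × ℕ :=
  let A := blockContaining (nsBlocks bs) (fmin ((nsBlocks bs).sup id))
  if (nsBlocks bs).card = 1 then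
    let l := A.sort (· ≤ ·)
    (l.getD 0 0, l.getD 1 0, l.getD 1 0, l.getD 2 0)
  else
    let B := ((nsBlocks bs).erase A).sup id
    (fmin A, fmax A, fmin B, fmax B)

/-- The leap statistic on `NC n 3`: `leap(ab|cd) = c - 2 + max(0, c - b)`,
and `leap({a,b,c}) = b - 2` (the case `b = c`). -/
def leap (bs : Finset (Finset ℕ)) : ℕ :=
  let (_, b, c, _) := blockQuad bs
  (c - 2) + (c - b)

/-- The skew statistic on `NC n 3`: `skew(ab|cd) = c - 2 + a` if `b < c`, else `c - 2`;
`skew({a,b,c}) = b - 2` (the case `b = c`). -/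
def skew (bs : Finset (Finset ℕ)) : ℕ :=
  let (a, b, c, _) := blockQuad bs
  if b < c then c - 2 + a else c - 2

/-- The mag statistic on `NC n 3`: `mag(ab|cd) = a + max(b, c) - 2 - ⌈(b - a)/2⌉`,
and `mag({a,b,c}) = a + b - 2 - ⌈(b - a)/2⌉` (the case `b = c`). -/
def mag (bs : Finset (Finset ℕ)) : ℕ :=
  let (a, b, c, _) := blockQuad bs
  a + max b c - 2 - (b - a + 1) / 2

/-- The area statistic on noncrossing partitions:
`area(π) = ∑_{β, β' ∈ π} #{ i ∈ β' : i < max β < max β' }` (ordered pairs of blocks). -/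
def ncArea (bs : Finset (Finset ℕ)) : ℕ :=
  ∑ β ∈ bs, ∑ γ ∈ bs, (γ.filter (fun i => i < fmax β ∧ fmax β < fmax γ)).card

/-- The elements of the non-singleton blocks, listed in increasing order, with
the middle element of a size-3 block listed twice. -/
def nsList (bs : Finset (Finset ℕ)) : List ℕ :=
  let l := ((nsBlocks bs).sup id).sort (· ≤ ·)
  if l.length = 3 then [l.getD 0 0, l.getD 1 0, l.getD 1 0, l.getD 2 0] else l

/-- The multiset of block sizes of a partition. -/
def blockSizes (bs : Finset (Finset ℕ)) : Multiset ℕ := bs.val.map Finset.card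

/-- The image of a partition of `{1, …, n}` under the flip `i ↦ n + 1 - i`. -/
def flipBlocks (n : ℕ) (bs : Finset (Finset ℕ)) : Finset (Finset ℕ) :=
  bs.image (fun β => β.image (fun i => n + 1 - i))

/-! ### The mingarc statistic -/

/-- The gaps `ν_r = m_{r+1} - m_r - 1` between consecutive block minima
`m_1 < ⋯ < m_h` (with `m_{h+1} = n + 1`). -/
def nuList (n : ℕ) (bs : Finset (Finset ℕ)) : List ℕ :=
  let ms := ((bs.image fmin).sort (· ≤ ·)) ++ [n + 1]
  (List.range (bs.image fmin).card).map (fun r => ms.getD (r + 1) 0 - ms.getD r 0 - 1)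

/-- Concatenation of `replicate ν c` over a list of pairs `(c, ν)`. -/
def repeatEach : List (ℕ × ℕ) → List ℕ
  | [] => []
  | p :: r => List.replicate p.2 p.1 ++ repeatEach r

/-- The right endpoints `y_1 ≤ ⋯ ≤ y_{k-1}`: each block maximum `c_r` repeated
`ν_r` times, in increasing order. -/
def ysList (n : ℕ) (bs : Finset (Finset ℕ)) : List ℕ :=
  repeatEach (List.zip ((bs.image fmax).sort (· ≤ ·)) (nuList n bs))

/-- The left endpoints `x_1 < ⋯ < x_{k-1}`: the elements of `{1, …, n}` that are not
block maxima, in increasing order. -/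
def xsList (n : ℕ) (bs : Finset (Finset ℕ)) : List ℕ :=
  ((Finset.Icc 1 n).filter (fun i => i ∉ bs.image fmax)).sort (· ≤ ·)

/-- Greedy left-to-right selection of arcs: keep the first arc, and thereafter keep the
earliest arc whose left endpoint exceeds the right endpoint of the last kept arc. -/
def greedyArcs : List (ℕ × ℕ) → Option ℕ → List (ℕ × ℕ)
  | [], _ => []
  | a :: rest, none => a :: greedyArcs rest (some a.2)
  | a :: rest, some r =>
      if r < a.1 then a :: greedyArcs rest (some a.2) else greedyArcs rest (some r)

/-- The mingarc statistic: the sum of `n - y_i` over the greedily selected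
candidate arcs `[x_i, y_i]`. -/
def mingarc (n : ℕ) (bs : Finset (Finset ℕ)) : ℕ :=
  ((greedyArcs (List.zip (xsList n bs) (ysList n bs)) none).map (fun p => n - p.2)).sum

/-! ### The map η from polyominoes to noncrossing partitions -/

/-- Largest column index `i < m` with `colHeight lower i ≤ j`: the rightmost cell
adjacent to the floor in row `j`. -/
def eFloor {m k : ℕ} (P : Polyomino m k) (j : ℕ) : ℕ :=
  (((List.range m).filter (fun i => decide (colHeight P.lower i ≤ j))).getLastD 0)

/-- Smallest column index `i` with `colHeight upper i ≥ j + 1`: the leftmost cell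
adjacent to the ceiling in row `j` (with default `m - 1`). -/
def fCeil {m k : ℕ} (P : Polyomino m k) (j : ℕ) : ℕ :=
  (((List.range m).filter (fun i => decide (j + 1 ≤ colHeight P.upper i))).headD (m - 1))

/-- The number of cells adjacent to the ceiling in row `j`. -/
def rowCount {m k : ℕ} (P : Polyomino m k) (j : ℕ) : ℕ :=
  fCeil P (j + 1) - fCeil P j + 1

/-- Pick, `cnt` times, the largest label in `{1, …, L}` not used yet. -/
def pickRow : ℕ → ℕ → Finset ℕ → Finset ℕ
  | 0, _, _ => ∅
  | cnt + 1, L, used =>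
      let x := fmax ((Finset.Icc 1 L) \ used)
      insert x (pickRow cnt L (insert x used))

/-- The blocks of `η(P)`: label the cells adjacent to the floor `1, …, n` going bottom
to top, left to right (the label of the floor cell in column `i`, row `j` is
`i + j + 1`, and the labels present in rows `≤ j` are exactly `1, …, eFloor P j + j + 1`);
then going bottom to top, left to right over the cells adjacent to the ceiling, assign
to each the largest unused indexing label occurring in the same row or below; the
blocks are the label sets of the ceiling rows. -/
def etaBlocks {m k : ℕ} (P : Polyomino m k) : Finset (Finset ℕ) :=
  (((List.range k).foldl
      (fun st j =>
        let B := pickRow (rowCount P j) (eFloor P j + j + 1) st.1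
        (st.1 ∪ B, B :: st.2))
      ((∅ : Finset ℕ), ([] : List (Finset ℕ)))).2).toFinset


structure Quad where
  a : ℕ
  b : ℕ
  c : ℕ
  d : ℕ

theorem Quad.eq_of {p q : Quad} (h1 : p.a = q.a) (h2 : p.b = q.b) (h3 : p.c = q.c)
    (h4 : p.d = q.d) : p = q := by
  cases p; cases q; simp_all

/-- quadruples describing noncrossing partitions -/
def QN (n : ℕ) (q : Quad) : Prop :=
  1 ≤ q.a ∧ q.a < q.c ∧ q.c < q.d ∧ q.d ≤ n ∧ q.b ≤ n ∧ ((q.a < q.b ∧ q.b ≤ q.c) ∨ q.d < q.b)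

def qskip (q : Quad) : ℕ := (q.b - q.a - 1) + (q.d - q.c - 1)
def qleap (q : Quad) : ℕ := (q.c - 2) + (q.c - q.b)

/-- quadruples (u2,u3,l1,l2) describing polyominoes -/
def QP (m : ℕ) (q : Quad) : Prop :=
  q.a ≤ q.b ∧ q.a < q.c ∧ q.b < q.d ∧ q.c ≤ q.d ∧ q.d ≤ m

def qarea (q : Quad) : ℕ := q.c + q.d - q.a - q.b - 2
def qbounce (m : ℕ) (q : Quad) : ℕ :=
  if q.a = 0 then (if q.b = 0 then 0 else 1 + m - q.d)
  else if q.b < q.c then 2 + m - q.c else 3 + 2 * m - q.c - q.d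

/-- from the grid -/
def gridP (M x z : ℕ) : Quad :=
  if x ≤ M then ⟨0, M + 1 - x, z, M + 1⟩ else ⟨1, M + 2 - z, M + 2, x + 1⟩

def acN (a c Y w : ℕ) : Quad :=
  if Y = 1 then ⟨a, c, c, c + w + 1⟩ else ⟨a, c + Y + w, c, c + Y - 1⟩

def gridN (t x z : ℕ) : Quad :=
  if x < t then ⟨t - x, t, t + 1, t + 1 + z⟩
  else if x - t < z - 1 then acN 1 (t + 2) (x - t + 1) (z - 1 - (x - t) - 1)
  else acN 2 (t + 2) z (x - t - (z - 1))

def fwd (n : ℕ) (q : Quad) : Quad :=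
  if q.b + 2 ≤ q.c then ⟨n - q.d + 1, n - q.c + q.a, n - q.c + 1, n - q.c + q.b⟩
  else if q.b + 1 = q.c then gridP (n - 2 - q.b) (q.b - q.a) (q.d - q.b - 1)
  else if q.c = 2 then (if q.b = 2 then ⟨0, 0, 1, q.d - 2⟩ else ⟨0, 0, q.d - 1, q.b - 2⟩)
  else
    let Y := if q.b = q.c then 1 else q.d - q.c + 1
    let w := if q.b = q.c then q.d - q.c - 1 else q.b - q.d - 1
    if 3 ≤ q.a then
      ⟨n - q.c + 2 - Y - w, n - q.c + 2 - Y, n - q.c + 2, n - q.c + 2 + (q.c - q.a - 1)⟩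
    else if q.a = 1 then gridP (n - q.c) (Y - 1 + (q.c - 2)) (Y + w + 1)
    else gridP (n - q.c) (Y - 1 + w + (q.c - 2)) Y

def bwd (n : ℕ) (q : Quad) : Quad :=
  if q.a = 0 then
    if q.b = 0 then (if q.c = 1 then ⟨1, 2, 2, q.d + 2⟩ else ⟨1, q.d + 2, 2, q.c + 1⟩)
    else gridN (n - 1 - q.d) (q.d - q.b) q.c
  else if q.c ≤ q.b then ⟨q.b - q.c + 1, q.d - q.c + 1, n + 1 - q.c, n + 1 - q.a⟩
  else if q.a = 1 then gridN (n - q.c) (q.d - 1) (q.c - q.b)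
  else acN (n + 1 - q.d) (n + 2 - q.c) (q.c - q.b) (q.b - q.a)

set_option maxHeartbeats 2000000 in
theorem fwd_ok (n : ℕ) (hn : 3 ≤ n) (q : Quad) (h : QN n q) :
    QP (n - 2) (fwd n q) ∧ qarea (fwd n q) = qskip q ∧ qbounce (n - 2) (fwd n q) = qleap q := by
  obtain ⟨a, b, c, d⟩ := q
  simp only [QN] at h
  simp only [fwd, gridP, ↓reduceIte]
  repeat' (first | rw [if_pos (by omega)] | rw [if_neg (by omega)] | rw [if_pos trivial] | rw [if_neg not_false] | split)
  all_goals simp only [QP, qarea, qskip, qbounce, qleap, ↓reduceIte]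
  all_goals refine ⟨?_, ?_, ?_⟩
  all_goals repeat' (first | rw [if_pos (by omega)] | rw [if_neg (by omega)] | rw [if_pos trivial] | rw [if_neg not_false] | split)
  all_goals first | contradiction | omega

set_option maxHeartbeats 2000000 in
theorem bwd_fwd (n : ℕ) (hn : 3 ≤ n) (q : Quad) (h : QN n q) : bwd n (fwd n q) = q := by
  obtain ⟨a, b, c, d⟩ := q
  simp only [QN] at h
  simp only [fwd, gridP, ↓reduceIte]
  repeat' (first | rw [if_pos (by omega)] | rw [if_neg (by omega)] | rw [if_pos trivial] | rw [if_neg not_false] | split)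
  all_goals simp only [bwd, gridN, acN, ↓reduceIte]
  all_goals repeat' (first | rw [if_pos (by omega)] | rw [if_neg (by omega)] | rw [if_pos trivial] | rw [if_neg not_false] | split)
  all_goals simp only [Quad.mk.injEq]
  all_goals first | contradiction | omega

theorem bwd_ok (n : ℕ) (hn : 3 ≤ n) (q : Quad) (h : QP (n - 2) q) : QN n (bwd n q) := by
  obtain ⟨a, b, c, d⟩ := q
  simp only [QP] at h
  simp only [bwd, gridN, acN, ↓reduceIte]
  repeat' (first | rw [if_pos (by omega)] | rw [if_neg (by omega)] | rw [if_pos trivial] | rw [if_neg not_false] | split)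
  all_goals simp only [QN]
  all_goals first | contradiction | omega

set_option maxHeartbeats 2000000 in
theorem fwd_bwd (n : ℕ) (hn : 3 ≤ n) (q : Quad) (h : QP (n - 2) q) : fwd n (bwd n q) = q := by
  obtain ⟨a, b, c, d⟩ := q
  simp only [QP] at h
  simp only [bwd, gridN, acN, ↓reduceIte]
  repeat' (first | rw [if_pos (by omega)] | rw [if_neg (by omega)] | rw [if_pos trivial] | rw [if_neg not_false] | split)
  all_goals simp only [fwd, gridP, ↓reduceIte]
  all_goals repeat' (first | rw [if_pos (by omega)] | rw [if_neg (by omega)] | rw [if_pos trivial] | rw [if_neg not_false] | split)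
  all_goals simp only [Quad.mk.injEq]
  all_goals first | contradiction | omega

theorem quad_card (n u v : ℕ) (hn : 3 ≤ n) :
    Nat.card {q : Quad // QN n q ∧ qskip q = u ∧ qleap q = v} =
    Nat.card {q : Quad // QP (n - 2) q ∧ qarea q = u ∧ qbounce (n - 2) q = v} := by
  refine Nat.card_congr ⟨fun q => ⟨fwd n q.1, ?_⟩, fun q => ⟨bwd n q.1, ?_⟩, ?_, ?_⟩
  · obtain ⟨h1, h2, h3⟩ := fwd_ok n hn q.1 q.2.1
    exact ⟨h1, h2.trans q.2.2.1, h3.trans q.2.2.2⟩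
  · have h0 := bwd_ok n hn q.1 q.2.1
    obtain ⟨h1, h2, h3⟩ := fwd_ok n hn _ h0
    rw [fwd_bwd n hn q.1 q.2.1] at h2 h3
    exact ⟨h0, h2.symm.trans q.2.2.1, h3.symm.trans q.2.2.2⟩
  · intro q; exact Subtype.ext (bwd_fwd n hn q.1 q.2.1)
  · intro q; exact Subtype.ext (fwd_bwd n hn q.1 q.2.1)

/-! ### polyomino side -/

theorem mem_pathPts (w : List Step) (p : ℕ × ℕ) :
    p ∈ pathPts w ↔ ∃ w1 w2, w = w1 ++ w2 ∧ pathPos w1 = p := by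
  simp only [pathPts, List.mem_toFinset, List.mem_map, List.mem_range]
  constructor
  · rintro ⟨i, _, h⟩
    exact ⟨w.take i, w.drop i, (List.take_append_drop i w).symm, h⟩
  · rintro ⟨w1, w2, rfl, h⟩
    refine ⟨w1.length, by simp, by simpa using h⟩

theorem mem_pathPts_nil (x y : ℕ) : (x, y) ∈ pathPts [] ↔ x = 0 ∧ y = 0 := by
  rw [mem_pathPts]
  constructor
  · rintro ⟨w1, w2, h, h'⟩
    have := (List.append_eq_nil_iff.mp h.symm).1
    subst this
    simp [pathPos, countE, countN] at h'
    omega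
  · rintro ⟨rfl, rfl⟩
    exact ⟨[], [], rfl, by simp [pathPos, countE, countN]⟩

theorem mem_pathPts_E (w : List Step) (x y : ℕ) :
    (x, y) ∈ pathPts (Step.E :: w) ↔ (x = 0 ∧ y = 0) ∨ (1 ≤ x ∧ (x - 1, y) ∈ pathPts w) := by
  rw [mem_pathPts, mem_pathPts]
  constructor
  · rintro ⟨w1, w2, h, h'⟩
    cases w1 with
    | nil => simp [pathPos, countE, countN] at h'; omega
    | cons s w1 =>
      simp only [List.cons_append, List.cons.injEq] at h
      obtain ⟨rfl, rfl⟩ := h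
      simp [pathPos, countE, countN] at h'
      right
      refine ⟨by omega, w1, w2, rfl, ?_⟩
      simp [pathPos, countE, countN]; omega
  · rintro (⟨rfl, rfl⟩ | ⟨hx, w1, w2, rfl, h'⟩)
    · exact ⟨[], _, rfl, by simp [pathPos, countE, countN]⟩
    · refine ⟨Step.E :: w1, w2, rfl, ?_⟩
      simp [pathPos, countE, countN] at h' ⊢; omega

theorem mem_pathPts_N (w : List Step) (x y : ℕ) :
    (x, y) ∈ pathPts (Step.N :: w) ↔ (x = 0 ∧ y = 0) ∨ (1 ≤ y ∧ (x, y - 1) ∈ pathPts w) := by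
  rw [mem_pathPts, mem_pathPts]
  constructor
  · rintro ⟨w1, w2, h, h'⟩
    cases w1 with
    | nil => simp [pathPos, countE, countN] at h'; omega
    | cons s w1 =>
      simp only [List.cons_append, List.cons.injEq] at h
      obtain ⟨rfl, rfl⟩ := h
      simp [pathPos, countE, countN] at h'
      right
      refine ⟨by omega, w1, w2, rfl, ?_⟩
      simp [pathPos, countE, countN]; omega
  · rintro (⟨rfl, rfl⟩ | ⟨hx, w1, w2, rfl, h'⟩)
    · exact ⟨[], _, rfl, by simp [pathPos, countE, countN]⟩
    · refine ⟨Step.N :: w1, w2, rfl, ?_⟩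
      simp [pathPos, countE, countN] at h' ⊢; omega

/-- `k` east steps, then `w` -/
def es (k : ℕ) (w : List Step) : List Step := List.replicate k Step.E ++ w

theorem es_succ (k : ℕ) (w : List Step) : es (k + 1) w = Step.E :: es k w := rfl
theorem es_zero (w : List Step) : es 0 w = w := rfl

theorem zero_mem_pathPts (w : List Step) : (0, 0) ∈ pathPts w := by
  rw [mem_pathPts]; exact ⟨[], w, rfl, by simp [pathPos, countE, countN]⟩

theorem mem_pathPts_es (k : ℕ) (w : List Step) (x y : ℕ) :
    (x, y) ∈ pathPts (es k w) ↔ (x < k ∧ y = 0) ∨ (k ≤ x ∧ (x - k, y) ∈ pathPts w) := by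
  induction k generalizing x with
  | zero => simp [es_zero]
  | succ k ih =>
    rw [es_succ, mem_pathPts_E, ih, Nat.sub_sub, Nat.add_comm 1 k]
    constructor
    · rintro (h | ⟨h, h1 | ⟨h1, h2⟩⟩)
      · left; omega
      · left; omega
      · right; exact ⟨by omega, h2⟩
    · rintro (h | ⟨h, h2⟩)
      · by_cases hx : x = 0
        · left; omega
        · right; exact ⟨by omega, Or.inl (by omega)⟩
      · right; exact ⟨by omega, Or.inr ⟨by omega, h2⟩⟩

/-- the path to `(m,3)` with north steps at `p, q, r`. -/
def mkPath (m p q r : ℕ) : List Step :=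
  es p (Step.N :: es (q - p) (Step.N :: es (r - q) (Step.N :: es (m - r) [])))

theorem mem_mkPath {m p q r : ℕ} (h1 : p ≤ q) (h2 : q ≤ r) (h3 : r ≤ m) (x y : ℕ) :
    (x, y) ∈ pathPts (mkPath m p q r) ↔
      (y = 0 ∧ x ≤ p) ∨ (y = 1 ∧ p ≤ x ∧ x ≤ q) ∨ (y = 2 ∧ q ≤ x ∧ x ≤ r) ∨
      (y = 3 ∧ r ≤ x ∧ x ≤ m) := by
  simp only [mkPath, mem_pathPts_es, mem_pathPts_N, mem_pathPts_nil]
  omega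

theorem countE_es (k : ℕ) (w : List Step) : countE (es k w) = k + countE w := by
  simp [countE, es]
theorem countN_es (k : ℕ) (w : List Step) : countN (es k w) = countN w := by
  simp [countN, es, List.count_replicate]
theorem countE_N (w : List Step) : countE (Step.N :: w) = countE w := by simp [countE]
theorem countN_N (w : List Step) : countN (Step.N :: w) = countN w + 1 := by simp [countN]
theorem countE_nil : countE [] = 0 := rfl
theorem countN_nil : countN [] = 0 := rfl

theorem countE_mkPath {m p q r : ℕ} (h1 : p ≤ q) (h2 : q ≤ r) (h3 : r ≤ m) :
    countE (mkPath m p q r) = m := by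
  simp only [mkPath, countE_es, countE_N, countE_nil]; omega
theorem countN_mkPath (m p q r : ℕ) : countN (mkPath m p q r) = 3 := by
  simp only [mkPath, countN_es, countN_N, countN_nil]

theorem path_succ (w : List Step) (k : ℕ) (h : countN w = k + 1) :
    ∃ a w', w = es a (Step.N :: w') ∧ countN w' = k := by
  induction w with
  | nil => simp [countN] at h
  | cons s w ih =>
    cases s with
    | N => exact ⟨0, w, rfl, by simpa [countN] using h⟩
    | E =>
      obtain ⟨a, w', rfl, h'⟩ := ih (by simpa [countN] using h)
      exact ⟨a + 1, w', rfl, h'⟩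

theorem path_zero (w : List Step) (h : countN w = 0) : ∃ a, w = es a [] := by
  induction w with
  | nil => exact ⟨0, rfl⟩
  | cons s w ih =>
    cases s with
    | N => simp [countN] at h
    | E =>
      obtain ⟨a, rfl⟩ := ih (by simpa [countN] using h)
      exact ⟨a + 1, rfl⟩

theorem exists_mkPath (m : ℕ) (w : List Step) (hE : countE w = m) (hN : countN w = 3) :
    ∃ p q r, p ≤ q ∧ q ≤ r ∧ r ≤ m ∧ w = mkPath m p q r := by
  obtain ⟨a, w, rfl, h⟩ := path_succ w 2 hN
  obtain ⟨b, w, rfl, h'⟩ := path_succ w 1 h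
  obtain ⟨c, w, rfl, h''⟩ := path_succ w 0 h'
  obtain ⟨d, rfl⟩ := path_zero w h''
  simp only [countE_es, countE_N, countE_nil] at hE
  refine ⟨a, a + b, a + b + c, by omega, by omega, by omega, ?_⟩
  simp only [mkPath]
  congr 4
  · omega
  · congr 3
    · omega
    · congr 1; omega

theorem colAux_es (k : ℕ) (w : List Step) (h i : ℕ) :
    (colHeightsAux (es k w) h).getD i 0 =
      if i < k then h else (colHeightsAux w h).getD (i - k) 0 := by
  induction k generalizing i with
  | zero => simp [es_zero]
  | succ k ih =>
    rw [es_succ, colHeightsAux]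
    cases i with
    | zero => simp
    | succ i => rw [List.getD_cons_succ, ih]; simp

theorem colHeight_mkPath {m p q r : ℕ} (h1 : p ≤ q) (h2 : q ≤ r) (h3 : r ≤ m) (i : ℕ)
    (hi : i < m) :
    colHeight (mkPath m p q r) i =
      (if p ≤ i then 1 else 0) + (if q ≤ i then 1 else 0) + (if r ≤ i then 1 else 0) := by
  simp only [colHeight, mkPath, colAux_es, colHeightsAux]
  repeat' split
  all_goals omega

theorem sum_ind (m p : ℕ) : ∑ i ∈ Finset.range m, (if p ≤ i then 1 else 0) = m - p := by
  induction m with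
  | zero => simp
  | succ m ih => rw [Finset.sum_range_succ, ih]; split <;> omega

/-- the polyomino of a quadruple `(u2,u3,l1,l2)` -/
def mkPoly (m : ℕ) (hm : 1 ≤ m) (q : Quad) (h : QP m q) : Polyomino m 3 where
  lower := mkPath m q.c q.d m
  upper := mkPath m 0 q.a q.b
  lowerE := countE_mkPath h.2.2.2.1 h.2.2.2.2 le_rfl
  lowerN := countN_mkPath _ _ _ _
  upperE := countE_mkPath (Nat.zero_le _) h.1 (by obtain ⟨h1, h2, h3, h4, h5⟩ := h; omega)
  upperN := countN_mkPath _ _ _ _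
  above := by
    obtain ⟨h1, h2, h3, h4, h5⟩ := h
    intro i hi
    rw [colHeight_mkPath h4 h5 le_rfl i hi,
      colHeight_mkPath (Nat.zero_le _) h1 (by omega) i hi]
    repeat' split
    all_goals omega
  meet := by
    obtain ⟨h1, h2, h3, h4, h5⟩ := h
    ext ⟨x, y⟩
    rw [Finset.mem_inter, mem_mkPath h4 h5 le_rfl, mem_mkPath (Nat.zero_le _) h1 (by omega)]
    simp only [Finset.mem_insert, Finset.mem_singleton, Prod.mk.injEq]
    omega

theorem mkPoly_area (m : ℕ) (hm : 1 ≤ m) (q : Quad) (h : QP m q) :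
    area (mkPoly m hm q h) = qarea q := by
  have hs : ∑ i ∈ Finset.range m,
      (colHeight (mkPoly m hm q h).upper i - colHeight (mkPoly m hm q h).lower i)
      + ∑ i ∈ Finset.range m, colHeight (mkPoly m hm q h).lower i
      = ∑ i ∈ Finset.range m, colHeight (mkPoly m hm q h).upper i := by
    rw [← Finset.sum_add_distrib]
    refine Finset.sum_congr rfl fun i hi => ?_
    have := (mkPoly m hm q h).above i (Finset.mem_range.mp hi)
    omega
  unfold area
  obtain ⟨h1, h2, h3, h4, h5⟩ := h
  have e1 : ∑ i ∈ Finset.range m, colHeight (mkPath m q.c q.d m) i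
      = (m - q.c) + (m - q.d) + (m - m) := by
    rw [← sum_ind m q.c, ← sum_ind m q.d, ← sum_ind m m, ← Finset.sum_add_distrib,
      ← Finset.sum_add_distrib]
    exact Finset.sum_congr rfl fun i hi =>
      colHeight_mkPath h4 h5 le_rfl i (Finset.mem_range.mp hi)
  have e2 : ∑ i ∈ Finset.range m, colHeight (mkPath m 0 q.a q.b) i
      = (m - 0) + (m - q.a) + (m - q.b) := by
    rw [← sum_ind m 0, ← sum_ind m q.a, ← sum_ind m q.b, ← Finset.sum_add_distrib,
      ← Finset.sum_add_distrib]
    exact Finset.sum_congr rfl fun i hi =>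
      colHeight_mkPath (Nat.zero_le _) h1 (by omega) i (Finset.mem_range.mp hi)
  simp only [mkPoly] at hs ⊢
  rw [e1, e2] at hs
  unfold qarea
  omega

theorem eastTarget_eq (hL : ℕ → ℕ) (m x y c : ℕ) (hc : c ≤ m) (hx : x ≤ c)
    (h : ∀ i < m, y ≤ hL i ↔ c ≤ i) : eastTarget hL m x y = c := by
  unfold eastTarget
  rw [List.headD_eq_head?_getD, List.head?_filter]
  rcases Nat.lt_or_ge c m with hcm | hcm
  · have : (List.range m).find? (fun i => decide (x ≤ i ∧ y ≤ hL i)) = some c := by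
      rw [List.find?_range_eq_some]
      refine ⟨by simp [hx, (h c hcm).2 le_rfl], List.mem_range.mpr hcm, fun j hj => ?_⟩
      have := h j (by omega)
      simp only [Bool.not_eq_true', decide_eq_false_iff_not]
      omega
    rw [this]; rfl
  · have : (List.range m).find? (fun i => decide (x ≤ i ∧ y ≤ hL i)) = none := by
      rw [List.find?_eq_none]
      intro j hj
      have hj := List.mem_range.mp hj
      have := h j hj
      simp only [decide_eq_true_eq]
      omega
    rw [this]
    simp; omega

theorem bounceAux_done (hU hL : ℕ → ℕ) (m n f j : ℕ) : bounceAux hU hL m n f m n j = 0 := by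
  cases f <;> simp [bounceAux]

theorem bounceAux_last (hU hL : ℕ → ℕ) (m n f x y j : ℕ) (h : ¬ (x = m ∧ y = n))
    (hu : hU (x - 1) = n) :
    bounceAux hU hL m n (f + 1) x y j = (j + 1) * ((n - y) + (m - x)) := by
  rw [bounceAux, if_neg h]
  simp only [hu, if_true, bounceAux_done, Nat.add_zero]

theorem bounceAux_step (hU hL : ℕ → ℕ) (m n f x y j y' x' : ℕ) (h : ¬ (x = m ∧ y = n))
    (hu : hU (x - 1) = y') (hy : y' ≠ n) (ht : eastTarget hL m x y' = x') :
    bounceAux hU hL m n (f + 1) x y j =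
      (j + 1) * ((y' - y) + (x' - x)) + bounceAux hU hL m n f x' y' (j + 1) := by
  rw [bounceAux, if_neg h]
  simp only [hu, if_neg hy, ht]

theorem mkPoly_bounce (m : ℕ) (hm : 1 ≤ m) (q : Quad) (h : QP m q) :
    bounce (mkPoly m hm q h) = qbounce m q := by
  obtain ⟨a, b, c, d⟩ := q
  unfold bounce
  obtain ⟨h1, h2, h3, h4, h5⟩ := h
  simp only at h1 h2 h3 h4 h5
  simp only [mkPoly]
  have hU : ∀ i < m, colHeight (mkPath m 0 a b) i =
      1 + (if a ≤ i then 1 else 0) + (if b ≤ i then 1 else 0) := fun i hi => by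
    rw [colHeight_mkPath (Nat.zero_le _) h1 (by omega) i hi]; simp
  have hL : ∀ i < m, colHeight (mkPath m c d m) i =
      (if c ≤ i then 1 else 0) + (if d ≤ i then 1 else 0) := fun i hi => by
    rw [colHeight_mkPath h4 h5 le_rfl i hi, if_neg (show ¬ m ≤ i by omega)]; rfl
  generalize colHeight (mkPath m 0 a b) = U at *
  generalize colHeight (mkPath m c d m) = L at *
  have t1 : ∀ x ≤ c, eastTarget L m x 1 = c := fun x hx =>
    eastTarget_eq L m x 1 c (by omega) hx fun i hi => by
      rw [hL i hi]; repeat' split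
      all_goals omega
  have t2 : ∀ x ≤ d, eastTarget L m x 2 = d := fun x hx =>
    eastTarget_eq L m x 2 d (by omega) hx fun i hi => by
      rw [hL i hi]; repeat' split
      all_goals omega
  have hUd : U (d - 1) = 3 := by
    rw [hU _ (by omega), if_pos (by omega), if_pos (by omega)]
  unfold qbounce
  simp only
  by_cases ha : a = 0
  · rw [if_pos ha]
    by_cases hb : b = 0
    · rw [if_pos hb, bounceAux_last U L m 3 _ 1 0 0 (by omega)
        (by rw [hU _ (by omega), if_pos (by omega), if_pos (by omega)])]
      omega
    · rw [if_neg hb, bounceAux_step U L m 3 _ 1 0 0 2 d (by omega)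
        (by rw [hU _ (by omega), if_pos (by omega), if_neg (by omega)]) (by omega)
        (t2 _ (by omega)), bounceAux_last U L m 3 _ d 2 _ (by omega) hUd]
      omega
  · rw [if_neg ha, bounceAux_step U L m 3 _ 1 0 0 1 c (by omega)
        (by rw [hU _ (by omega), if_neg (by omega), if_neg (by omega)]) (by omega)
        (t1 _ (by omega))]
    by_cases hb : b < c
    · rw [if_pos hb, bounceAux_last U L m 3 _ c 1 _ (by omega)
        (by rw [hU _ (by omega), if_pos (by omega), if_pos (by omega)])]
      omega
    · rw [if_neg hb, bounceAux_step U L m 3 _ c 1 _ 2 d (by omega)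
        (by rw [hU _ (by omega), if_pos (by omega), if_neg (by omega)]) (by omega)
        (t2 _ (by omega)), bounceAux_last U L m 3 _ d 2 _ (by omega) hUd]
      omega

theorem mkPath_inj {m p q r p' q' r' : ℕ} (h1 : p ≤ q) (h2 : q ≤ r) (h3 : r ≤ m)
    (h1' : p' ≤ q') (h2' : q' ≤ r') (h3' : r' ≤ m) (h : mkPath m p q r = mkPath m p' q' r') :
    p = p' ∧ q = q' ∧ r = r' := by
  have key := fun x y => (mem_mkPath h1 h2 h3 x y).symm.trans
    ((iff_of_eq (congrArg (fun w => (x, y) ∈ pathPts w) h)).trans (mem_mkPath h1' h2' h3' x y))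
  have a1 := key p 0
  have a2 := key p' 0
  have a3 := key q 1
  have a4 := key q' 1
  have a5 := key r 2
  have a6 := key r' 2
  simp at a1 a2 a3 a4 a5 a6
  omega

theorem mkPoly_inj (m : ℕ) (hm : 1 ≤ m) (q q' : Quad) (h : QP m q) (h' : QP m q')
    (e : mkPoly m hm q h = mkPoly m hm q' h') : q = q' := by
  have e1 := congrArg Polyomino.lower e
  have e2 := congrArg Polyomino.upper e
  simp only [mkPoly] at e1 e2
  obtain ⟨h1, h2, h3, h4, h5⟩ := h
  obtain ⟨k1, k2, k3, k4, k5⟩ := h'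
  have f1 := mkPath_inj h4 h5 le_rfl k4 k5 le_rfl e1
  have f2 := mkPath_inj (Nat.zero_le _) h1 (by omega) (Nat.zero_le _) k1 (by omega) e2
  exact Quad.eq_of f2.2.1 f2.2.2 f1.1 f1.2.1

theorem mkPoly_surj (m : ℕ) (hm : 1 ≤ m) (P : Polyomino m 3) :
    ∃ q, ∃ h : QP m q, mkPoly m hm q h = P := by
  obtain ⟨w, w', hwE, hwN, hwE', hwN', above, meet⟩ := P
  obtain ⟨p, q, r, h1, h2, h3, rfl⟩ := exists_mkPath m w hwE hwN
  obtain ⟨p', q', r', h1', h2', h3', rfl⟩ := exists_mkPath m w' hwE' hwN'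
  have ab : ∀ i < m, _ := fun i hi => by
    have := above i hi
    rw [colHeight_mkPath h1 h2 h3 i hi, colHeight_mkPath h1' h2' h3' i hi] at this
    exact this
  have mt : ∀ x y : ℕ, _ := fun x y => by
    have := Finset.ext_iff.mp meet (x, y)
    rw [Finset.mem_inter, mem_mkPath h1 h2 h3, mem_mkPath h1' h2' h3'] at this
    simp only [Finset.mem_insert, Finset.mem_singleton, Prod.mk.injEq] at this
    exact this
  have b1 : p' ≤ p := by
    by_contra hc
    have := ab p (by omega)
    repeat' split at this
    all_goals omega
  have b2 : q' ≤ q := by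
    by_contra hc
    have := ab q (by omega)
    repeat' split at this
    all_goals omega
  have b3 : r' ≤ r := by
    by_contra hc
    have := ab r (by omega)
    repeat' split at this
    all_goals omega
  have c1 := (mt p' 0).1 (by omega)
  have c2 := (mt r 3).1 (by omega)
  have c3 : q' < p := by
    by_contra hc
    have := (mt p 1).1 (by omega)
    omega
  have c4 : r' < q := by
    by_contra hc
    have := (mt q 2).1 (by omega)
    omega
  obtain rfl : p' = 0 := by omega
  obtain rfl : r = m := by omega
  exact ⟨⟨q', r', p, q⟩, ⟨h2', c3, c4, h1, h2⟩, rfl⟩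

theorem poly_card (m u v : ℕ) (hm : 1 ≤ m) :
    Nat.card {q : Quad // QP m q ∧ qarea q = u ∧ qbounce m q = v} =
    Nat.card {P : Polyomino m 3 // area P = u ∧ bounce P = v} := by
  refine Nat.card_eq_of_bijective (fun q => ⟨mkPoly m hm q.1 q.2.1, ?_, ?_⟩) ⟨?_, ?_⟩
  · rw [mkPoly_area]; exact q.2.2.1
  · rw [mkPoly_bounce]; exact q.2.2.2
  · intro q q' e
    exact Subtype.ext (mkPoly_inj m hm _ _ q.2.1 q'.2.1 (congrArg Subtype.val e))
  · rintro ⟨P, h1, h2⟩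
    obtain ⟨q, h, rfl⟩ := mkPoly_surj m hm P
    rw [mkPoly_area] at h1
    rw [mkPoly_bounce] at h2
    exact ⟨⟨q, h, h1, h2⟩, rfl⟩


/-! ### noncrossing side -/

theorem SetPartition.eq_of {n : ℕ} {P Q : SetPartition n} (h : P.blocks = Q.blocks) : P = Q := by
  cases P; cases Q; simp_all

theorem fmin_eq {s : Finset ℕ} {x : ℕ} (hx : x ∈ s) (h : ∀ y ∈ s, x ≤ y) : fmin s = x := by
  unfold fmin
  rw [dif_pos ⟨x, hx⟩]
  exact le_antisymm (Finset.min'_le _ _ hx) (Finset.le_min' _ _ _ h)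

theorem fmax_eq {s : Finset ℕ} {x : ℕ} (hx : x ∈ s) (h : ∀ y ∈ s, y ≤ x) : fmax s = x :=
  le_antisymm (Finset.sup_le h) (Finset.le_sup (f := id) hx)

/-- complete a family of blocks by singletons -/
def mkBlocks (n : ℕ) (T : Finset (Finset ℕ)) : Finset (Finset ℕ) :=
  T ∪ (Finset.Icc 1 n \ T.sup id).image (fun i => {i})

theorem mem_mkBlocks (n : ℕ) (T : Finset (Finset ℕ)) (β : Finset ℕ) :
    β ∈ mkBlocks n T ↔ β ∈ T ∨ ∃ i, (1 ≤ i ∧ i ≤ n) ∧ (∀ γ ∈ T, i ∉ γ) ∧ β = {i} := by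
  simp only [mkBlocks, Finset.mem_union, Finset.mem_image, Finset.mem_sdiff, Finset.mem_Icc,
    Finset.mem_sup, id]
  refine or_congr Iff.rfl (exists_congr fun i => ?_)
  constructor
  · rintro ⟨⟨h1, h2⟩, rfl⟩
    exact ⟨h1, fun γ hγ hi => h2 ⟨γ, hγ, hi⟩, rfl⟩
  · rintro ⟨h1, h2, rfl⟩
    exact ⟨⟨h1, fun ⟨γ, hγ, hi⟩ => h2 γ hγ hi⟩, rfl⟩

theorem blocks_eq {n : ℕ} (P : SetPartition n) : P.blocks = mkBlocks n (nsBlocks P.blocks) := by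
  have huniq : ∀ β ∈ P.blocks, ∀ γ ∈ P.blocks, ∀ i, i ∈ β → i ∈ γ → β = γ := by
    intro β hβ γ hγ i h1 h2
    by_contra hne
    exact Finset.disjoint_left.mp (P.disjoint β hβ γ hγ hne) h1 h2
  have hsing : ∀ β ∈ P.blocks, ¬ 2 ≤ β.card → ∃ i, β = {i} := by
    intro β hβ h2
    have : β ≠ ∅ := fun h => P.not_empty_mem (h ▸ hβ)
    have := Finset.card_pos.mpr (Finset.nonempty_iff_ne_empty.mpr this)
    exact Finset.card_eq_one.mp (by omega)
  ext β
  rw [mem_mkBlocks]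
  simp only [nsBlocks, Finset.mem_filter]
  constructor
  · intro hβ
    by_cases h2 : 2 ≤ β.card
    · exact Or.inl ⟨hβ, h2⟩
    · obtain ⟨i, rfl⟩ := hsing β hβ h2
      refine Or.inr ⟨i, ?_, ?_, rfl⟩
      · exact Finset.mem_Icc.mp ((P.cover i).2 ⟨_, hβ, Finset.mem_singleton_self i⟩)
      · rintro γ ⟨hγ, hc⟩ hi
        have := huniq _ hβ γ hγ i (Finset.mem_singleton_self i) hi
        subst this
        exact h2 hc
  · rintro (h | ⟨i, hi, h, rfl⟩)
    · exact h.1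
    · obtain ⟨γ, hγ, hiγ⟩ := (P.cover i).1 (Finset.mem_Icc.mpr hi)
      by_cases h2 : 2 ≤ γ.card
      · exact absurd hiγ (h γ ⟨hγ, h2⟩)
      · obtain ⟨j, rfl⟩ := hsing γ hγ h2
        rw [Finset.mem_singleton] at hiγ
        subst hiγ; exact hγ

/-- admissible families of non-singleton blocks -/
structure Good (n : ℕ) (T : Finset (Finset ℕ)) : Prop where
  two : ∀ β ∈ T, 2 ≤ β.card
  sub : ∀ β ∈ T, ∀ i ∈ β, 1 ≤ i ∧ i ≤ n
  disj : ∀ β ∈ T, ∀ γ ∈ T, β ≠ γ → Disjoint β γ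
  nc : IsNoncrossing T

def mkPart (n : ℕ) (T : Finset (Finset ℕ)) (h : Good n T) : SetPartition n where
  blocks := mkBlocks n T
  not_empty_mem := by
    rw [mem_mkBlocks]
    rintro (h' | ⟨i, _, _, h'⟩)
    · simpa using h.two _ h'
    · exact absurd h'.symm (Finset.singleton_ne_empty i)
  cover := by
    intro i
    rw [Finset.mem_Icc]
    constructor
    · intro hi
      by_cases hT : ∃ γ ∈ T, i ∈ γ
      · obtain ⟨γ, hγ, hiγ⟩ := hT
        exact ⟨γ, (mem_mkBlocks _ _ _).2 (Or.inl hγ), hiγ⟩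
      · push Not at hT
        exact ⟨{i}, (mem_mkBlocks _ _ _).2 (Or.inr ⟨i, hi, hT, rfl⟩), Finset.mem_singleton_self i⟩
    · rintro ⟨β, hβ, hi⟩
      rcases (mem_mkBlocks _ _ _).1 hβ with h' | ⟨j, hj, _, rfl⟩
      · exact h.sub β h' i hi
      · rw [Finset.mem_singleton] at hi; subst hi; exact hj
  disjoint := by
    intro β hβ γ hγ hne
    rcases (mem_mkBlocks _ _ _).1 hβ with h1 | ⟨j, hj, h1, rfl⟩ <;>
    rcases (mem_mkBlocks _ _ _).1 hγ with h2 | ⟨k, hk, h2, rfl⟩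
    · exact h.disj β h1 γ h2 hne
    · exact Finset.disjoint_singleton_right.mpr (h2 β h1)
    · exact Finset.disjoint_singleton_left.mpr (h1 γ h2)
    · rw [Finset.disjoint_singleton]
      rintro rfl; exact hne rfl

theorem mkPart_nc (n : ℕ) (T : Finset (Finset ℕ)) (h : Good n T) :
    IsNoncrossing (mkBlocks n T) := by
  intro a b c d hab hbc hcd β hβ γ hγ ha hc hb hd
  rcases (mem_mkBlocks _ _ _).1 hβ with h1 | ⟨j, hj, h1, rfl⟩
  · rcases (mem_mkBlocks _ _ _).1 hγ with h2 | ⟨k, hk, h2, rfl⟩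
    · exact h.nc a b c d hab hbc hcd β h1 γ h2 ha hc hb hd
    · simp only [Finset.mem_singleton] at hb hd; omega
  · simp only [Finset.mem_singleton] at ha hc; omega

theorem mkBlocks_disj (n : ℕ) (T : Finset (Finset ℕ)) (h : ∀ β ∈ T, 2 ≤ β.card) :
    Disjoint T ((Finset.Icc 1 n \ T.sup id).image (fun i => {i})) := by
  rw [Finset.disjoint_left]
  intro β hβ h'
  obtain ⟨i, _, rfl⟩ := Finset.mem_image.mp h'
  simpa using h _ hβ

theorem mkBlocks_card (n : ℕ) (T : Finset (Finset ℕ)) (h : Good n T) :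
    (mkBlocks n T).card = T.card + (n - (T.sup id).card) := by
  unfold mkBlocks
  rw [Finset.card_union_of_disjoint (mkBlocks_disj n T h.two),
    Finset.card_image_of_injective _ Finset.singleton_injective,
    Finset.card_sdiff_of_subset, Nat.card_Icc, Nat.add_sub_cancel]
  intro i hi
  rw [Finset.mem_sup] at hi
  obtain ⟨β, hβ, hi⟩ := hi
  exact Finset.mem_Icc.mpr (h.sub β hβ i hi)

theorem nsBlocks_mkBlocks (n : ℕ) (T : Finset (Finset ℕ)) (h : ∀ β ∈ T, 2 ≤ β.card) :
    nsBlocks (mkBlocks n T) = T := by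
  ext β
  simp only [nsBlocks, Finset.mem_filter, mem_mkBlocks]
  constructor
  · rintro ⟨h' | ⟨i, _, _, rfl⟩, h2⟩
    · exact h'
    · simp at h2
  · exact fun h' => ⟨Or.inl h', h β h'⟩

theorem skip_mkBlocks (n : ℕ) (T : Finset (Finset ℕ)) (h : ∀ β ∈ T, 2 ≤ β.card) :
    skip (mkBlocks n T) = skip T := by
  unfold skip
  unfold mkBlocks
  rw [Finset.sum_union (mkBlocks_disj n T h), Nat.add_eq_left]
  refine Finset.sum_eq_zero fun β hβ => ?_
  obtain ⟨i, _, rfl⟩ := Finset.mem_image.mp hβ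
  rw [fmax_eq (x := i) (by simp) (by simp), fmin_eq (x := i) (by simp) (by simp)]
  simp

def QT (q : Quad) : Finset (Finset ℕ) :=
  if q.b = q.c then {{q.a, q.b, q.d}} else {{q.a, q.b}, {q.c, q.d}}

theorem pair_ne {a b c d : ℕ} (h1 : a ≠ c) (h2 : a ≠ d) : ({a, b} : Finset ℕ) ≠ {c, d} := by
  intro h
  have : a ∈ ({c, d} : Finset ℕ) := h ▸ (by simp)
  simp at this
  omega

theorem QT_good (n : ℕ) (q : Quad) (h : QN n q) : Good n (QT q) := by
  obtain ⟨a, b, c, d⟩ := q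
  obtain ⟨h1, h2, h3, h4, h5, h6⟩ := h
  simp only at h1 h2 h3 h4 h5 h6
  unfold QT
  simp only
  split
  · next hbc =>
    subst hbc
    refine ⟨?_, ?_, ?_, ?_⟩
    · simp only [Finset.mem_singleton, forall_eq]
      rw [Finset.card_eq_three.mpr ⟨a, b, d, by omega, by omega, by omega, rfl⟩]; omega
    · simp only [Finset.mem_singleton, forall_eq, Finset.mem_insert]
      intro i hi; omega
    · intro β hβ γ hγ hne
      rw [Finset.mem_singleton] at hβ hγ
      exact absurd (hβ.trans hγ.symm) hne
    · intro _ _ _ _ _ _ _ β hβ γ hγ _ _ _ _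
      rw [Finset.mem_singleton] at hβ hγ
      exact hβ.trans hγ.symm
  · next hbc =>
    refine ⟨?_, ?_, ?_, ?_⟩
    · simp only [Finset.mem_insert, Finset.mem_singleton]
      rintro β (rfl | rfl)
      · rw [Finset.card_pair (by omega)]
      · rw [Finset.card_pair (by omega)]
    · simp only [Finset.mem_insert, Finset.mem_singleton]
      rintro β (rfl | rfl) i hi <;> simp at hi <;> omega
    · simp only [Finset.mem_insert, Finset.mem_singleton]
      rintro β (rfl | rfl) γ (rfl | rfl) hne
      · exact absurd rfl hne
      · rw [Finset.disjoint_left]; intro i hi hi'; simp at hi hi'; omega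
      · rw [Finset.disjoint_left]; intro i hi hi'; simp at hi hi'; omega
      · exact absurd rfl hne
    · intro x y z w hxy hyz hzw
      simp only [Finset.mem_insert, Finset.mem_singleton]
      rintro β (rfl | rfl) γ (rfl | rfl) <;> simp only [Finset.mem_insert, Finset.mem_singleton] <;>
        intro e1 e2 e3 e4
      · trivial
      · exfalso; omega
      · exfalso; omega
      · trivial

theorem QT_card (n : ℕ) (hn : 3 ≤ n) (q : Quad) (h : QN n q) :
    (mkBlocks n (QT q)).card = n - 3 + 1 := by
  rw [mkBlocks_card n _ (QT_good n q h)]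
  obtain ⟨a, b, c, d⟩ := q
  obtain ⟨h1, h2, h3, h4, h5, h6⟩ := h
  simp only at h1 h2 h3 h4 h5 h6
  unfold QT
  simp only
  split
  · next hbc =>
    rw [Finset.sup_singleton, Finset.card_singleton, id,
      Finset.card_eq_three.mpr ⟨a, b, d, by omega, by omega, by omega, rfl⟩]
    omega
  · next hbc =>
    rw [Finset.card_pair (pair_ne (by omega) (by omega)), Finset.sup_insert, Finset.sup_singleton,
      id, id, Finset.sup_eq_union, Finset.card_union_of_disjoint, Finset.card_pair (by omega),
      Finset.card_pair (by omega)]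
    · omega
    · rw [Finset.disjoint_left]; intro i hi hi'; simp at hi hi'; omega

theorem QT_skip (n : ℕ) (q : Quad) (h : QN n q) : skip (mkBlocks n (QT q)) = qskip q := by
  rw [skip_mkBlocks n _ (QT_good n q h).two]
  obtain ⟨a, b, c, d⟩ := q
  obtain ⟨h1, h2, h3, h4, h5, h6⟩ := h
  simp only at h1 h2 h3 h4 h5 h6
  unfold QT skip qskip
  simp only
  split
  · next hbc =>
    rw [Finset.sum_singleton, fmax_eq (x := d) (by simp) (by intro y; simp; omega),
      fmin_eq (x := a) (by simp) (by intro y; simp; omega),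
      Finset.card_eq_three.mpr ⟨a, b, d, by omega, by omega, by omega, rfl⟩]
    omega
  · next hbc =>
    rw [Finset.sum_pair (pair_ne (by omega) (by omega)),
      fmax_eq (s := {a, b}) (x := b) (by simp) (by intro y; simp; omega),
      fmin_eq (s := {a, b}) (x := a) (by simp) (by intro y; simp; omega),
      fmax_eq (s := {c, d}) (x := d) (by simp) (by intro y; simp; omega),
      fmin_eq (s := {c, d}) (x := c) (by simp) (by intro y; simp; omega),
      Finset.card_pair (by omega), Finset.card_pair (by omega)]
    omega

theorem QT_quad (n : ℕ) (q : Quad) (h : QN n q) :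
    blockQuad (mkBlocks n (QT q)) = (q.a, q.b, q.c, q.d) := by
  unfold blockQuad
  rw [nsBlocks_mkBlocks n _ (QT_good n q h).two]
  obtain ⟨a, b, c, d⟩ := q
  obtain ⟨h1, h2, h3, h4, h5, h6⟩ := h
  simp only at h1 h2 h3 h4 h5 h6
  have hmin : fmin ((QT ⟨a, b, c, d⟩).sup id) = a := by
    apply fmin_eq
    · rw [Finset.mem_sup]
      unfold QT
      simp only
      split <;> simp
    · intro y hy
      rw [Finset.mem_sup] at hy
      obtain ⟨β, hβ, hy⟩ := hy
      unfold QT at hβ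
      simp only at hβ
      split at hβ
      · simp only [Finset.mem_singleton] at hβ
        subst hβ; simp at hy; omega
      · simp only [Finset.mem_insert, Finset.mem_singleton] at hβ
        rcases hβ with rfl | rfl <;> simp at hy <;> omega
  rw [hmin]
  unfold QT
  simp only
  split
  · next hbc =>
    subst hbc
    have hA : blockContaining {({a, b, d} : Finset ℕ)} a = {a, b, d} := by
      unfold blockContaining
      rw [Finset.filter_true_of_mem (by simp), Finset.sup_singleton, id]
    have hs : ({a, b, d} : Finset ℕ).sort (· ≤ ·) = [a, b, d] := by
      rw [Finset.sort_insert, Finset.sort_insert, Finset.sort_singleton]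
      · simp; omega
      · simp; omega
      · simp; omega
      · simp; omega
    rw [hA, hs]
    simp
  · next hbc =>
    have hne := pair_ne (a := a) (b := b) (c := c) (d := d) (by omega) (by omega)
    have hA : blockContaining {({a, b} : Finset ℕ), {c, d}} a = {a, b} := by
      unfold blockContaining
      rw [Finset.filter_insert, if_pos (by simp), Finset.filter_singleton,
        if_neg (by simp; omega)]
      simp
    have hB : (({({a, b} : Finset ℕ), {c, d}} : Finset (Finset ℕ)).erase {a, b}).sup id
        = {c, d} := by
      rw [Finset.erase_insert (by simpa using hne), Finset.sup_singleton, id]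
    rw [hA, hB, Finset.card_pair hne, if_neg (by omega),
      fmax_eq (s := {a, b}) (x := b) (by simp) (by intro y; simp; omega),
      fmin_eq (s := {a, b}) (x := a) (by simp) (by intro y; simp; omega),
      fmax_eq (s := {c, d}) (x := d) (by simp) (by intro y; simp; omega),
      fmin_eq (s := {c, d}) (x := c) (by simp) (by intro y; simp; omega)]

theorem QT_leap (n : ℕ) (q : Quad) (h : QN n q) : leap (mkBlocks n (QT q)) = qleap q := by
  unfold leap
  rw [QT_quad n q h]
  rfl

def mkNC (n : ℕ) (hn : 3 ≤ n) (q : Quad) (h : QN n q) : NC n 3 :=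
  ⟨mkPart n (QT q) (QT_good n q h), mkPart_nc n _ (QT_good n q h), QT_card n hn q h⟩

theorem sort_two (x y : ℕ) (h : x ≠ y) : ∃ a b, a < b ∧ ({x, y} : Finset ℕ) = {a, b} := by
  rcases Nat.lt_or_gt_of_ne h with h | h
  · exact ⟨x, y, h, rfl⟩
  · exact ⟨y, x, h, Finset.pair_comm x y⟩

theorem sort_three (x y z : ℕ) (h1 : x ≠ y) (h2 : x ≠ z) (h3 : y ≠ z) :
    ∃ a b c, a < b ∧ b < c ∧ ({x, y, z} : Finset ℕ) = {a, b, c} := by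
  have key : ∀ a b c : ℕ, (∀ i, (i = x ∨ i = y ∨ i = z) ↔ (i = a ∨ i = b ∨ i = c)) →
      ({x, y, z} : Finset ℕ) = {a, b, c} := by
    intro a b c h; ext i; simpa using h i
  rcases Nat.lt_or_gt_of_ne h1 with h1 | h1 <;> rcases Nat.lt_or_gt_of_ne h2 with h2 | h2 <;>
    rcases Nat.lt_or_gt_of_ne h3 with h3 | h3
  · exact ⟨x, y, z, h1, h3, rfl⟩
  · exact ⟨x, z, y, h2, h3, key _ _ _ (by omega)⟩
  · omega
  · exact ⟨z, x, y, h2, h1, key _ _ _ (by omega)⟩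
  · exact ⟨y, x, z, h1, h2, key _ _ _ (by omega)⟩
  · omega
  · exact ⟨y, z, x, h3, h2, key _ _ _ (by omega)⟩
  · exact ⟨z, y, x, h3, h1, key _ _ _ (by omega)⟩

theorem sum_ns (n : ℕ) (hn : 3 ≤ n) (P : SetPartition n) (hc : P.blocks.card = n - 3 + 1) :
    ∑ β ∈ nsBlocks P.blocks, (β.card - 1) = 2 := by
  have hpos : ∀ β ∈ P.blocks, 1 ≤ β.card := by
    intro β hβ
    have : β ≠ ∅ := fun h => P.not_empty_mem (h ▸ hβ)
    exact Finset.card_pos.mpr (Finset.nonempty_iff_ne_empty.mpr this)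
  have h1 : ∑ β ∈ P.blocks, β.card = n := by
    have : P.blocks.biUnion id = Finset.Icc 1 n := by
      ext i
      rw [Finset.mem_biUnion]
      exact (P.cover i).symm
    have h2 := Finset.card_biUnion (s := P.blocks) (t := id) P.disjoint
    rw [this, Nat.card_Icc] at h2
    simpa using h2.symm
  have h2 : ∑ β ∈ P.blocks, (β.card - 1) + ∑ β ∈ P.blocks, 1 = ∑ β ∈ P.blocks, β.card := by
    rw [← Finset.sum_add_distrib]
    refine Finset.sum_congr rfl fun β hβ => ?_
    have := hpos β hβ
    omega
  have h3 : ∑ β ∈ nsBlocks P.blocks, (β.card - 1) = ∑ β ∈ P.blocks, (β.card - 1) := by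
    unfold nsBlocks
    rw [Finset.sum_filter]
    refine Finset.sum_congr rfl fun β hβ => ?_
    split <;> omega
  rw [h3]
  rw [h1, Finset.sum_const, smul_eq_mul, mul_one, hc] at h2
  omega

theorem mkNC_surj (n : ℕ) (hn : 3 ≤ n) (π : NC n 3) : ∃ q, ∃ h : QN n q, mkNC n hn q h = π := by
  obtain ⟨P, hnc, hcard⟩ := π
  suffices H : ∃ q, QN n q ∧ QT q = nsBlocks P.blocks by
    obtain ⟨q, hq, e⟩ := H
    refine ⟨q, hq, Subtype.ext (SetPartition.eq_of ?_)⟩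
    change mkBlocks n (QT q) = P.blocks
    rw [e, ← blocks_eq P]
  have hsum := sum_ns n hn P hcard
  have htwo : ∀ β ∈ nsBlocks P.blocks, 2 ≤ β.card := fun β hβ => (Finset.mem_filter.mp hβ).2
  have hin : ∀ β ∈ nsBlocks P.blocks, β ∈ P.blocks := fun β hβ => (Finset.mem_filter.mp hβ).1
  have hrange : ∀ β ∈ nsBlocks P.blocks, ∀ i ∈ β, 1 ≤ i ∧ i ≤ n := fun β hβ i hi =>
    Finset.mem_Icc.mp ((P.cover i).2 ⟨β, hin β hβ, hi⟩)
  have hle : (nsBlocks P.blocks).card ≤ 2 := by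
    have := Finset.card_nsmul_le_sum (nsBlocks P.blocks) (fun β => β.card - 1) 1
      (fun β hβ => by have := htwo β hβ; omega)
    rw [hsum] at this
    simpa using this
  generalize nsBlocks P.blocks = T at *
  have h0 : T.card ≠ 0 := by
    intro h
    rw [Finset.card_eq_zero] at h
    subst h
    simp at hsum
  obtain h1 | h2 : T.card = 1 ∨ T.card = 2 := by omega
  · obtain ⟨β, rfl⟩ := Finset.card_eq_one.mp h1
    rw [Finset.sum_singleton] at hsum
    obtain ⟨x, y, z, hxy, hxz, hyz, rfl⟩ := Finset.card_eq_three.mp (show β.card = 3 by omega)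
    obtain ⟨a, b, c, hab, hbc, e⟩ := sort_three x y z hxy hxz hyz
    rw [e] at hrange ⊢
    have ha := hrange _ (Finset.mem_singleton_self _) a (by simp)
    have hb := hrange _ (Finset.mem_singleton_self _) b (by simp)
    have hc := hrange _ (Finset.mem_singleton_self _) c (by simp)
    exact ⟨⟨a, b, b, c⟩, by simp only [QN]; omega, by simp [QT]⟩
  · obtain ⟨β, γ, hne, rfl⟩ := Finset.card_eq_two.mp h2
    rw [Finset.sum_pair hne] at hsum
    have hβ2 := htwo β (by simp)
    have hγ2 := htwo γ (by simp)
    obtain ⟨x, y, hxy, rfl⟩ := Finset.card_eq_two.mp (show β.card = 2 by omega)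
    obtain ⟨z, w, hzw, rfl⟩ := Finset.card_eq_two.mp (show γ.card = 2 by omega)
    obtain ⟨a, b, hab, e⟩ := sort_two x y hxy
    obtain ⟨c, d, hcd, e'⟩ := sort_two z w hzw
    rw [e, e'] at hrange hin hne ⊢
    have core : ∀ a b c d : ℕ, a < b → c < d → a < c → ({a, b} : Finset ℕ) ≠ {c, d} →
        (∀ β ∈ ({{a, b}, {c, d}} : Finset (Finset ℕ)), β ∈ P.blocks) →
        (∀ β ∈ ({{a, b}, {c, d}} : Finset (Finset ℕ)), ∀ i ∈ β, 1 ≤ i ∧ i ≤ n) →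
        ∃ q, QN n q ∧ QT q = {{a, b}, {c, d}} := by
      intro a b c d hab hcd hac hne hin hrange
      have ha := hrange {a, b} (by simp) a (by simp)
      have hb := hrange {a, b} (by simp) b (by simp)
      have hd := hrange {c, d} (by simp) d (by simp)
      have hdis := Finset.disjoint_left.mp
        (P.disjoint {a, b} (hin _ (by simp)) {c, d} (hin _ (by simp)) hne)
      have hb' : b ∉ ({c, d} : Finset ℕ) := hdis (by simp)
      simp only [Finset.mem_insert, Finset.mem_singleton] at hb'
      have hx : ¬ (c < b ∧ b < d) := by
        rintro ⟨g1, g2⟩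
        exact hne (hnc a c b d hac g1 g2 {a, b} (hin _ (by simp)) {c, d} (hin _ (by simp))
          (by simp) (by simp) (by simp) (by simp))
      refine ⟨⟨a, b, c, d⟩, by simp only [QN]; omega, ?_⟩
      unfold QT
      simp only
      rw [if_neg (by omega)]
    have hac : a ≠ c := by
      rintro rfl
      exact Finset.disjoint_left.mp
        (P.disjoint {a, b} (hin _ (by simp)) {a, d} (hin _ (by simp)) hne)
        (show a ∈ _ by simp) (by simp)
    rcases Nat.lt_or_gt_of_ne hac with hac | hac
    · exact core a b c d hab hcd hac hne hin hrange
    · rw [Finset.pair_comm ({a, b} : Finset ℕ) {c, d}] at hin hrange ⊢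
      exact core c d a b hcd hab hac hne.symm hin hrange

theorem nc_card (n u v : ℕ) (hn : 3 ≤ n) :
    Nat.card {q : Quad // QN n q ∧ qskip q = u ∧ qleap q = v} =
    Nat.card {π : NC n 3 // skip π.val.blocks = u ∧ leap π.val.blocks = v} := by
  refine Nat.card_eq_of_bijective (fun q => ⟨mkNC n hn q.1 q.2.1, ?_, ?_⟩) ⟨?_, ?_⟩
  · exact (QT_skip n q.1 q.2.1).trans q.2.2.1
  · exact (QT_leap n q.1 q.2.1).trans q.2.2.2
  · intro q q' e
    have e1 : mkBlocks n (QT q.1) = mkBlocks n (QT q'.1) :=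
      congrArg (fun π => π.val.val.blocks) e
    have e2 := congrArg blockQuad e1
    rw [QT_quad n _ q.2.1, QT_quad n _ q'.2.1] at e2
    simp only [Prod.mk.injEq] at e2
    exact Subtype.ext (Quad.eq_of e2.1 e2.2.1 e2.2.2.1 e2.2.2.2)
  · rintro ⟨π, h1, h2⟩
    obtain ⟨q, h, rfl⟩ := mkNC_surj n hn π
    exact ⟨⟨q, h, (QT_skip n q h).symm.trans h1, (QT_leap n q h).symm.trans h2⟩, rfl⟩


/-- The pair (skip, leap) is a combinatorial interpretation of `N_{n,3}(q,t)`: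
for all `n ≥ 3` and `u v`, the number of `π ∈ NC(n,3)` with `skip π = u` and
`leap π = v` equals the number of `P ∈ PP(n-2,3)` with `area P = u`, `bounce P = v`. -/
theorem skip_leap_pair (n u v : ℕ) (hn : 3 ≤ n) :
    Nat.card {π : NC n 3 // skip π.val.blocks = u ∧ leap π.val.blocks = v} =
    Nat.card {P : Polyomino (n - 2) 3 // area P = u ∧ bounce P = v} := by
  exact (nc_card n u v hn).symm.trans ((quad_card n u v hn).trans (poly_card (n - 2) u v (by omega)))

end QtN
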